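/- The first homology group H₁(B₂(S₄)) of the unordered 2-point configuration space of the star graph with four edges is free abelian of rank 3, freely generated by the star classes α_{1jk} for 2 ≤ j < k ≤ 4. -/

import Mathlib

/-!
A combinatorial model of the Świątkowski chain complex of a finite graph
(finite CW-complex of dimension ≤ 1), computing the homology of its unordered
configuration spaces (An–Drummond-Cole–Knudsen).

A graph is given by a vertex type `V`, an edge type `E` and an endpoint map
`ends : E → V × V` (self-loops and multiple edges are allowed).  A half-edge is
a pair `(e, b) : E × Bool`, whose vertex is the corresponding endpoint of `e`.

We work with the ℤ-basis of the Świątkowski complex consisting of a monomial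
`m : E →₀ ℕ` in the edges together with a choice, for each vertex `v`, of a
local generator from `S(v) = ℤ⟨∅, v, h ∈ H(v)⟩`: a half-edge at `v`
(`Sum.inl`), the vertex itself (`Sum.inr true`), or `∅` (`Sum.inr false`).
The differential is the ℤ[E]-linear derivation with `∂h = e(h) - v(h)`,
with Koszul signs determined by a fixed enumeration of the vertices.
`degB` is the homological degree (number of half-edge factors) and `wtB` is the
weight (number of particles).  `hasDW i k` is the subgroup of chains of pure
degree `i` and weight `k`; `cyc i k` the corresponding cycles, `bdry i k` the
boundaries of degree/weight `(i+1, k)` chains, and `Hgr i k` their quotient,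
which is `H_i(B_k Γ)`.  `stab e` is edge stabilization (multiplication by `e`).
-/

namespace Swiatkowski

variable {V E : Type} [Fintype V] [Fintype E] [DecidableEq V] [DecidableEq E]

/-- The vertex of a half-edge. -/
def vtx (ends : E → V × V) (h : E × Bool) : V :=
  cond h.2 (ends h.1).2 (ends h.1).1

/-- The local generators at a vertex `v`: a half-edge at `v`, or the vertex
generator (`true`), or `∅` (`false`). -/
abbrev VGen (ends : E → V × V) (v : V) : Type :=
  {h : E × Bool // vtx ends h = v} ⊕ Bool

/-- A choice of local generator at every vertex. -/
abbrev States (ends : E → V × V) : Type := ∀ v : V, VGen ends v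

/-- The ℤ-basis of the Świątkowski complex: an edge monomial together with a
state. -/
abbrev Bas (ends : E → V × V) : Type := (E →₀ ℕ) × States ends

/-- The underlying ℤ-module of the Świątkowski complex. -/
abbrev SC (ends : E → V × V) : Type := Bas ends →₀ ℤ

variable (ends : E → V × V)

/-- An enumeration of the vertices, used for Koszul signs. -/
noncomputable def idx : V → ℕ := fun v => ((Fintype.equivFin V) v : ℕ)

/-- The Koszul sign of the half-edge slot at `v` inside the state `f`. -/
noncomputable def sgn (f : States ends) (v : V) : ℤ :=
  (-1) ^ (Finset.univ.filter fun w => idx w < idx v ∧ (f w).isLeft = true).card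

/-- Homological degree of a basis element: its number of half-edge factors. -/
def degB (b : Bas ends) : ℕ :=
  (Finset.univ.filter fun v => (b.2 v).isLeft = true).card

/-- Weight (particle number) of a basis element. -/
def wtB (b : Bas ends) : ℕ :=
  (b.1.sum fun _ n => n) + ∑ v : V, Sum.elim (fun _ => 1) (fun t => cond t 1 0) (b.2 v)

/-- Value of the differential on a basis element: the signed sum over the
half-edge slots `h` of the substitutions `h ↦ e(h)` and `h ↦ v(h)`. -/
noncomputable def Db (b : Bas ends) : SC ends :=
  ∑ v : V,
    (match b.2 v with
      | Sum.inl h =>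
          sgn ends b.2 v •
            (Finsupp.single (b.1 + Finsupp.single h.1.1 1,
                Function.update b.2 v (Sum.inr false)) (1 : ℤ)
              - Finsupp.single (b.1, Function.update b.2 v (Sum.inr true)) (1 : ℤ))
      | Sum.inr _ => 0)

/-- The differential of the Świątkowski complex. -/
noncomputable def D : SC ends →ₗ[ℤ] SC ends :=
  Finsupp.linearCombination ℤ (Db ends)

/-- The subgroup of chains of pure homological degree `i` and weight `k`. -/
noncomputable def hasDW (i k : ℕ) : Submodule ℤ (SC ends) where
  carrier := {x | ∀ b ∈ x.support, degB ends b = i ∧ wtB ends b = k}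
  add_mem' := by
    intro x y hx hy b hb
    rcases Finset.mem_union.mp (Finsupp.support_add hb) with h | h
    exacts [hx b h, hy b h]
  zero_mem' := by simp
  smul_mem' := by
    intro c x hx b hb
    exact hx b (Finsupp.support_smul hb)

/-- Cycles of degree `i` and weight `k`. -/
noncomputable def cyc (i k : ℕ) : Submodule ℤ (SC ends) := LinearMap.ker (D ends) ⊓ hasDW ends i k

/-- Boundaries of degree `i` and weight `k` chains. -/
noncomputable def bdry (i k : ℕ) : Submodule ℤ (SC ends) := Submodule.map (D ends) (hasDW ends (i + 1) k)

/-- The homology `H_i(B_k Γ)` of the weight-`k` Świątkowski complex. -/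
noncomputable def Hgr (i k : ℕ) :=
  cyc ends i k ⧸ Submodule.comap (cyc ends i k).subtype (bdry ends i k)

noncomputable instance (i k : ℕ) : AddCommGroup (Hgr ends i k) :=
  inferInstanceAs (AddCommGroup
    (cyc ends i k ⧸ Submodule.comap (cyc ends i k).subtype (bdry ends i k)))

/-- Edge stabilization: multiplication by the edge `e`. -/
noncomputable def stab (e : E) : SC ends →ₗ[ℤ] SC ends :=
  Finsupp.lmapDomain ℤ ℤ fun b => (b.1 + Finsupp.single e 1, b.2)

end Swiatkowski

namespace Star4

open Swiatkowski

/-- The star graph `S₄`: a central vertex `none` joined to four leaves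
`some i` by the edges `i : Fin 4`. -/
def ends : Fin 4 → Option (Fin 4) × Option (Fin 4) := fun e => (none, some e)

/-- The state placing the half-edge of edge `j` at the central vertex and `∅`
everywhere else. -/
def stateH (j : Fin 4) : States ends := fun v =>
  match v with
  | none => Sum.inl ⟨(j, false), rfl⟩
  | some _ => Sum.inr false

/-- The degree-one basis chain `h_j` (half-edge of edge `j` at the center). -/
noncomputable def sH (j : Fin 4) : SC ends :=
  Finsupp.single ((0 : Fin 4 →₀ ℕ), stateH j) (1 : ℤ)

/-- The star cycle `α_{1jk} = e_k(h₁ − h_j) + e_j(h_k − h₁) + e₁(h_j − h_k)`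
(indices shifted to start at `0`). -/
noncomputable def starCyc (j k : Fin 4) : SC ends :=
  stab ends k (sH 0 - sH j) + stab ends j (sH k - sH 0) + stab ends 0 (sH j - sH k)

end Star4

/-!
The differential is a sum of anticommuting pieces, one for each vertex. At a leaf `u` with edge `e`,
pushing a particle at `u` into `e` is therefore a chain map, homotopic to the identity through the
half-edge at `u`, so homology is carried by the chains that are empty at all leaves. The degree of
such a chain is at most the number of remaining vertices.

For `S₄` only the center `v` remains, so there are no leaf-empty chains of degree two to bound
anything, and those of degree one and weight two are the `∑ a_{ij} e_i h_j`. As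
`∂(e_i h_j) = e_i e_j - e_i v`, such a chain is a cycle exactly when the matrix `a` is antisymmetric
with zero row sums; it is then determined by `a_{12}, a_{13}, a_{23}` (indices starting at `0`),
which are its coordinates with respect to the star cycles.
-/

namespace Swiatkowski

variable {V E : Type} {ends : E → V × V}

/-- The half-edges at `v`, that is, the degree-one local generators there. -/
abbrev HalfEdgeAt (ends : E → V × V) (v : V) : Type := {h : E × Bool // vtx ends h = v}

/-- A vertex of valence one. A self-loop contributes two half-edges, so its vertex is not a leaf. -/
def IsLeaf (ends : E → V × V) (v : V) : Prop := ∃! h : E × Bool, vtx ends h = v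

lemma IsLeaf.subsingleton {u : V} (hu : IsLeaf ends u) : Subsingleton (HalfEdgeAt ends u) :=
  ⟨fun h h' ↦ Subtype.ext (hu.unique h.2 h'.2)⟩

/-- The chains all of whose basis elements have local generator `∅` at every vertex of `S`. When `S`
consists of leaves this subcomplex carries all the homology. -/
def emptyOn (ends : E → V × V) (S : Finset V) : Submodule ℤ (SC ends) :=
  Finsupp.supported ℤ ℤ {b | ∀ u ∈ S, b.2 u = Sum.inr false}

lemma supported_le_comap {α M : Type*} [AddCommGroup M] {s : Set α} {N : Submodule ℤ M}
    {φ : (α →₀ ℤ) →ₗ[ℤ] M} (h : ∀ b ∈ s, φ (Finsupp.single b 1) ∈ N) :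
    Finsupp.supported ℤ ℤ s ≤ N.comap φ := by
  rw [Finsupp.supported_eq_span_single, Submodule.span_le]
  exact Set.image_subset_iff.mpr h

section Signs

variable [Fintype V]

lemma idx_injective : Function.Injective (idx : V → ℕ) :=
  Fin.val_injective.comp (Fintype.equivFin V).injective

lemma sgn_eq_prod (f : States ends) (v : V) :
    sgn ends f v = ∏ w, if idx w < idx v ∧ (f w).isLeft then -1 else 1 := by
  simp [sgn, Finset.prod_ite]

variable [DecidableEq V]

@[to_additive]
lemma prod_update_mul {α : V → Type*} {M : Type*} [CommMonoid M] (φ : ∀ v, α v → M)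
    (f : ∀ v, α v) (u : V) (g : α u) :
    (∏ v, φ v (Function.update f u g v)) * φ u (f u) = (∏ v, φ v (f v)) * φ u g := by
  simp only [Function.apply_update φ, Finset.prod_update_of_mem (Finset.mem_univ u)]
  rw [← Finset.prod_sdiff (Finset.subset_univ {u}), Finset.prod_singleton]
  ac_rfl

lemma sgn_update_mul (f : States ends) (u v : V) (g : VGen ends u) :
    sgn ends (Function.update f u g) v * (if idx u < idx v ∧ (f u).isLeft then -1 else 1) =
      sgn ends f v * (if idx u < idx v ∧ g.isLeft then -1 else 1) := by
  simpa only [sgn_eq_prod] using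
    prod_update_mul (fun w s ↦ if idx w < idx v ∧ s.isLeft then (-1 : ℤ) else 1) f u g

lemma sgn_update_self (f : States ends) (v : V) (g : VGen ends v) :
    sgn ends (Function.update f v g) v = sgn ends f v := by
  simpa using sgn_update_mul f v v g

lemma sgn_update_of_isLeft_eq_not (f : States ends) {u : V} {g : VGen ends u}
    (hg : g.isLeft = !(f u).isLeft) (v : V) :
    sgn ends (Function.update f u g) v = if idx u < idx v then -sgn ends f v else sgn ends f v := by
  have h := sgn_update_mul f u v g
  cases hf : (f u).isLeft <;> simp only [hf, hg] at h <;> split_ifs at h ⊢ <;>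
    simp_all [neg_eq_iff_eq_neg]

lemma sgn_mul_sgn_update (f : States ends) {u v : V} (huv : u ≠ v) {g : VGen ends u}
    {g' : VGen ends v} (hg : g.isLeft = !(f u).isLeft) (hg' : g'.isLeft = !(f v).isLeft) :
    sgn ends f u * sgn ends (Function.update f u g) v =
      -(sgn ends f v * sgn ends (Function.update f v g') u) := by
  rw [sgn_update_of_isLeft_eq_not f hg, sgn_update_of_isLeft_eq_not f hg']
  rcases lt_or_gt_of_ne (idx_injective.ne huv) with h | h <;> simp [h, h.not_gt, mul_comm]

end Signs

section Grading

variable [Fintype V]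

lemma degB_eq_sum (b : Bas ends) : degB ends b = ∑ v, if (b.2 v).isLeft then 1 else 0 :=
  Finset.card_filter ..

lemma wtB_add_single (m : E →₀ ℕ) (e : E) (f : States ends) :
    wtB ends (m + Finsupp.single e 1, f) = wtB ends (m, f) + 1 := by
  simp only [wtB]
  rw [Finsupp.sum_add_index' (fun _ ↦ rfl) (fun _ _ _ ↦ rfl), Finsupp.sum_single_index rfl]
  ac_rfl

lemma single_mem_hasDW [DecidableEq E] {b : Bas ends} {i k : ℕ} (hdeg : degB ends b = i)
    (hwt : wtB ends b = k) : Finsupp.single b 1 ∈ hasDW ends i k :=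
  Finsupp.single_mem_supported ℤ 1 ⟨hdeg, hwt⟩

variable [DecidableEq V]

lemma degB_update (m m' : E →₀ ℕ) (f : States ends) (u : V) (g : VGen ends u) :
    degB ends (m', Function.update f u g) + (if (f u).isLeft then 1 else 0) =
      degB ends (m, f) + (if g.isLeft then 1 else 0) := by
  simpa only [degB_eq_sum] using
    sum_update_add (fun _ s ↦ if s.isLeft then 1 else 0) f u g

lemma wtB_update (m : E →₀ ℕ) (f : States ends) (u : V) (g : VGen ends u) :
    wtB ends (m, Function.update f u g) + Sum.elim (fun _ ↦ 1) (fun t ↦ cond t 1 0) (f u) =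
      wtB ends (m, f) + Sum.elim (fun _ ↦ 1) (fun t ↦ cond t 1 0) g := by
  simpa only [wtB, add_assoc, add_right_inj] using
    sum_update_add (fun _ s ↦ Sum.elim (fun _ ↦ 1) (fun t ↦ cond t 1 0) s) f u g

lemma degB_le_card_compl {S : Finset V} {b : Bas ends} (hb : ∀ u ∈ S, b.2 u = Sum.inr false) :
    degB ends b ≤ Sᶜ.card := by
  refine Finset.card_le_card fun v hv ↦ Finset.mem_compl.mpr fun hvS ↦ ?_
  simp [hb v hvS] at hv

lemma hasDW_inf_emptyOn_eq_bot [DecidableEq E] {S : Finset V} {i k : ℕ} (hi : Sᶜ.card < i) :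
    hasDW ends i k ⊓ emptyOn ends S = ⊥ := by
  refine (Submodule.eq_bot_iff _).mpr fun x ⟨hxdw, hxS⟩ ↦
    Finsupp.support_eq_empty.mp (Finset.eq_empty_of_forall_notMem fun b hb ↦ ?_)
  exact (degB_le_card_compl (hxS hb)).not_gt ((hxdw b hb).1 ▸ hi)

end Grading

section Boundary

variable [Fintype V] [DecidableEq V]

/-- The summand of the differential `D` that acts on the local generator at `v`. -/
noncomputable def boundaryAt (v : V) : SC ends →ₗ[ℤ] SC ends :=
  Finsupp.linearCombination ℤ fun b ↦
    match b.2 v with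
    | Sum.inl h =>
        sgn ends b.2 v •
          (Finsupp.single (b.1 + Finsupp.single h.1.1 1, Function.update b.2 v (Sum.inr false)) 1
            - Finsupp.single (b.1, Function.update b.2 v (Sum.inr true)) 1)
    | Sum.inr _ => 0

lemma D_eq_sum_boundaryAt : D ends = ∑ v, boundaryAt v := by
  ext1 b
  ext1
  simp [D, Db, boundaryAt]

lemma boundaryAt_single_of_inl {f : States ends} {v : V} {h : HalfEdgeAt ends v}
    (hf : f v = Sum.inl h) (m : E →₀ ℕ) :
    boundaryAt v (Finsupp.single (m, f) 1) = sgn ends f v •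
      (Finsupp.single (m + Finsupp.single h.1.1 1, Function.update f v (Sum.inr false)) 1
        - Finsupp.single (m, Function.update f v (Sum.inr true)) 1) := by
  simp [boundaryAt, hf]

lemma boundaryAt_single_of_inr {f : States ends} {v : V} {t : Bool}
    (hf : f v = Sum.inr t) (m : E →₀ ℕ) :
    boundaryAt v (Finsupp.single (m, f) (1 : ℤ)) = 0 := by
  simp [boundaryAt, hf]

lemma boundaryAt_comp_boundaryAt_add {v w : V} (hvw : v ≠ w) :
    (boundaryAt v ∘ₗ boundaryAt w + boundaryAt w ∘ₗ boundaryAt v : SC ends →ₗ[ℤ] SC ends) = 0 := by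
  ext1 ⟨m, f⟩
  ext1
  simp only [LinearMap.comp_apply, LinearMap.add_apply, LinearMap.zero_apply,
    Finsupp.lsingle_apply]
  have update_v (g : VGen ends v) : Function.update f v g w = f w :=
    Function.update_of_ne hvw.symm g f
  have update_w (g : VGen ends w) : Function.update f w g v = f v :=
    Function.update_of_ne hvw g f
  rcases hv : f v with h | t <;> rcases hw : f w with h' | t'
  · have sgn_swap (t t' : Bool) : sgn ends f v * sgn ends (Function.update f v (Sum.inr t)) w =
        -(sgn ends f w * sgn ends (Function.update f w (Sum.inr t')) v) :=
      sgn_mul_sgn_update f hvw (by simp [hv]) (by simp [hw])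
    obtain ⟨ε, sgn_vw, sgn_wv⟩ : ∃ ε,
        (∀ t, sgn ends f v * sgn ends (Function.update f v (Sum.inr t)) w = -ε) ∧
          ∀ t, sgn ends f w * sgn ends (Function.update f w (Sum.inr t)) v = ε :=
      ⟨_, (sgn_swap · false), fun t ↦ neg_inj.mp ((sgn_swap false t).symm.trans (sgn_swap _ _))⟩
    simp only [boundaryAt_single_of_inl hv, boundaryAt_single_of_inl hw, map_smul, map_sub,
      boundaryAt_single_of_inl ((update_v _).trans hw),
      boundaryAt_single_of_inl ((update_w _).trans hv), smul_sub, smul_smul, sgn_vw, sgn_wv,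
      Function.update_comm hvw, add_right_comm m (Finsupp.single h'.1.1 1)]
    module
  · simp only [boundaryAt_single_of_inl hv, boundaryAt_single_of_inr hw, map_smul, map_sub,
      boundaryAt_single_of_inr ((update_v _).trans hw), map_zero, sub_zero, smul_zero, add_zero]
  · simp only [boundaryAt_single_of_inr hv, boundaryAt_single_of_inl hw, map_smul, map_sub,
      boundaryAt_single_of_inr ((update_w _).trans hv), map_zero, sub_zero, smul_zero, add_zero]
  · simp only [boundaryAt_single_of_inr hv, boundaryAt_single_of_inr hw, map_zero, add_zero]

lemma boundaryAt_comp_self (v : V) :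
    (boundaryAt v ∘ₗ boundaryAt v : SC ends →ₗ[ℤ] SC ends) = 0 := by
  ext1 ⟨m, f⟩
  ext1
  simp only [LinearMap.comp_apply, LinearMap.zero_apply, Finsupp.lsingle_apply]
  rcases hv : f v with h | t
  · simp only [boundaryAt_single_of_inl hv, map_smul, map_sub, sub_zero, smul_zero,
      boundaryAt_single_of_inr (Function.update_self v (Sum.inr _) f)]
  · rw [boundaryAt_single_of_inr hv, map_zero]

lemma D_comp_D : D ends ∘ₗ D ends = 0 := by
  have D_comp_D_eq : D ends ∘ₗ D ends = ∑ v, ∑ w, boundaryAt v ∘ₗ boundaryAt w := by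
    rw [D_eq_sum_boundaryAt]
    exact Finset.sum_mul_sum ..
  have two_smul_eq_zero : (2 : ℤ) • (D ends ∘ₗ D ends) = 0 := by
    rw [two_smul]
    nth_rw 2 [D_comp_D_eq]
    rw [Finset.sum_comm, D_comp_D_eq, ← Finset.sum_add_distrib]
    refine Finset.sum_eq_zero fun v _ ↦ ?_
    rw [← Finset.sum_add_distrib]
    refine Finset.sum_eq_zero fun w _ ↦ ?_
    rcases eq_or_ne w v with rfl | hwv
    · rw [boundaryAt_comp_self, add_zero]
    · exact boundaryAt_comp_boundaryAt_add hwv.symm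
  exact (smul_eq_zero_iff_right two_ne_zero).mp two_smul_eq_zero

end Boundary

section Absorb

variable [DecidableEq V] {u : V}

/-- When `r` is the only half-edge at `u`, the chain endomorphism that pushes a particle at `u` into
the edge `e` of `r`: it sends `u ↦ e`, `r ↦ 0` and `∅ ↦ ∅`. -/
noncomputable def absorb (r : HalfEdgeAt ends u) : SC ends →ₗ[ℤ] SC ends :=
  Finsupp.linearCombination ℤ fun b ↦
    match b.2 u with
    | Sum.inl _ => 0
    | Sum.inr true =>
        Finsupp.single (b.1 + Finsupp.single r.1.1 1, Function.update b.2 u (Sum.inr false)) 1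
    | Sum.inr false => Finsupp.single b 1

variable (r : HalfEdgeAt ends u)

lemma absorb_single_of_inl {f : States ends} {h : HalfEdgeAt ends u} (hf : f u = Sum.inl h)
    (m : E →₀ ℕ) : absorb r (Finsupp.single (m, f) 1) = 0 := by
  simp [absorb, hf]

lemma absorb_single_of_true {f : States ends} (hf : f u = Sum.inr true) (m : E →₀ ℕ) :
    absorb r (Finsupp.single (m, f) 1) = Finsupp.single
      (m + Finsupp.single r.1.1 1, Function.update f u (Sum.inr false)) 1 := by
  simp [absorb, hf]

lemma absorb_single_of_false {f : States ends} (hf : f u = Sum.inr false) (m : E →₀ ℕ) :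
    absorb r (Finsupp.single (m, f) 1) = Finsupp.single (m, f) 1 := by
  simp [absorb, hf]

lemma emptyOn_le_comap_absorb (S : Finset V) :
    emptyOn ends S ≤ (emptyOn ends (insert u S)).comap (absorb r) := by
  refine supported_le_comap ?_
  rintro ⟨m, f⟩ hf
  rcases hu : f u with h | _ | _
  · rw [absorb_single_of_inl r hu]
    exact zero_mem _
  · rw [absorb_single_of_false r hu]
    exact Finsupp.single_mem_supported ℤ 1 (Finset.forall_mem_insert .. |>.mpr ⟨hu, hf⟩)
  · rw [absorb_single_of_true r hu]
    refine Finsupp.single_mem_supported ℤ 1 fun w hw ↦ ?_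
    rcases eq_or_ne w u with rfl | hwu
    · exact Function.update_self ..
    · exact (Function.update_of_ne hwu ..).trans (hf w (Finset.mem_of_mem_insert_of_ne hw hwu))

lemma absorb_eq_self {S : Finset V} (hu : u ∈ S) {x : SC ends} (hx : x ∈ emptyOn ends S) :
    absorb r x = x := by
  have emptyOn_le : emptyOn ends S ≤ LinearMap.eqLocus (absorb r) LinearMap.id :=
    supported_le_comap (N := LinearMap.eqLocus (absorb r) LinearMap.id) (φ := LinearMap.id)
      fun b hb ↦ absorb_single_of_false r (hb u hu) b.1
  exact emptyOn_le hx

variable [Fintype V]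

lemma hasDW_le_comap_absorb [DecidableEq E] (i k : ℕ) :
    hasDW ends i k ≤ (hasDW ends i k).comap (absorb r) := by
  refine supported_le_comap ?_
  rintro ⟨m, f⟩ ⟨hdeg, hwt⟩
  rcases hu : f u with h | _ | _
  · rw [absorb_single_of_inl r hu]
    exact zero_mem _
  · rw [absorb_single_of_false r hu]
    exact single_mem_hasDW hdeg hwt
  · rw [absorb_single_of_true r hu]
    refine single_mem_hasDW ?_ ?_
    · simpa [hu, hdeg] using
        degB_update m (m + Finsupp.single r.1.1 1) f u (Sum.inr false)
    · rw [wtB_add_single]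
      simpa [hu, hwt] using wtB_update m f u (Sum.inr false)

/-- The chain homotopy from `absorb r` to the identity: up to the Koszul sign, it sends `u ↦ -r` and
the other local generators at `u` to zero. The minus sign makes `∂(-r) = u - e`. -/
noncomputable def absorbHomotopy : SC ends →ₗ[ℤ] SC ends :=
  Finsupp.linearCombination ℤ fun b ↦
    match b.2 u with
    | Sum.inr true => -sgn ends b.2 u • Finsupp.single (b.1, Function.update b.2 u (Sum.inl r)) 1
    | _ => 0

lemma absorbHomotopy_single_of_true {f : States ends} (hf : f u = Sum.inr true) (m : E →₀ ℕ) :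
    absorbHomotopy r (Finsupp.single (m, f) 1) =
      -sgn ends f u • Finsupp.single (m, Function.update f u (Sum.inl r)) 1 := by
  simp [absorbHomotopy, hf]

lemma absorbHomotopy_single_of_ne {f : States ends} (hf : f u ≠ Sum.inr true) (m : E →₀ ℕ) :
    absorbHomotopy r (Finsupp.single (m, f) 1) = 0 := by
  simp only [absorbHomotopy, Finsupp.linearCombination_single, one_smul]

lemma boundaryAt_comp_absorbHomotopy_of_ne {v : V} (hvu : v ≠ u) :
    boundaryAt v ∘ₗ absorbHomotopy r = -(absorbHomotopy r ∘ₗ boundaryAt v) := by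
  ext1 ⟨m, f⟩
  ext1
  simp only [LinearMap.comp_apply, LinearMap.neg_apply, Finsupp.lsingle_apply]
  have update_v (g : VGen ends v) : Function.update f v g u = f u :=
    Function.update_of_ne hvu.symm g f
  have update_u (g : VGen ends u) : Function.update f u g v = f v :=
    Function.update_of_ne hvu g f
  by_cases hu : f u = Sum.inr true
  · rw [absorbHomotopy_single_of_true r hu, map_smul]
    rcases hv : f v with h | t
    · have sgn_swap (t : Bool) : sgn ends f v * sgn ends (Function.update f v (Sum.inr t)) u =
          -(sgn ends f u * sgn ends (Function.update f u (Sum.inl r)) v) :=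
        sgn_mul_sgn_update f hvu (by simp [hv]) (by simp [hu])
      rw [boundaryAt_single_of_inl ((update_u _).trans hv), boundaryAt_single_of_inl hv, map_smul,
        map_sub, absorbHomotopy_single_of_true r ((update_v _).trans hu),
        absorbHomotopy_single_of_true r ((update_v _).trans hu)]
      simp only [Function.update_comm hvu, smul_sub, smul_smul, mul_neg, neg_mul, sgn_swap]
      module
    · rw [boundaryAt_single_of_inr ((update_u _).trans hv), boundaryAt_single_of_inr hv]
      simp only [smul_zero, map_zero, neg_zero]
  · rw [absorbHomotopy_single_of_ne r hu, map_zero]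
    rcases hv : f v with h | t
    · rw [boundaryAt_single_of_inl hv, map_smul, map_sub,
        absorbHomotopy_single_of_ne r ((update_v _).trans_ne hu),
        absorbHomotopy_single_of_ne r ((update_v _).trans_ne hu)]
      simp only [sub_zero, smul_zero, neg_zero]
    · rw [boundaryAt_single_of_inr hv, map_zero, neg_zero]

lemma boundaryAt_comp_absorbHomotopy_self [Subsingleton (HalfEdgeAt ends u)] :
    boundaryAt u ∘ₗ absorbHomotopy r + absorbHomotopy r ∘ₗ boundaryAt u =
      LinearMap.id - absorb r := by
  ext1 ⟨m, f⟩
  ext1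
  simp only [LinearMap.comp_apply, LinearMap.add_apply, LinearMap.sub_apply, LinearMap.id_apply,
    Finsupp.lsingle_apply]
  have sgn_sq : sgn ends f u * sgn ends f u = 1 := by
    rw [sgn, ← mul_pow, neg_one_mul, neg_neg, one_pow]
  rcases hu : f u with h | _ | _
  · obtain rfl := Subsingleton.elim h r
    have update_self : Function.update f u (Sum.inl h) = f := by
      rw [← hu, Function.update_eq_self]
    rw [absorbHomotopy_single_of_ne h (by simp [hu]), boundaryAt_single_of_inl hu, map_smul,
      map_sub, absorbHomotopy_single_of_ne h (by simp),
      absorbHomotopy_single_of_true h (Function.update_self ..), absorb_single_of_inl h hu]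
    simp [sgn_update_self, update_self, sgn_sq]
  · rw [absorbHomotopy_single_of_ne r (by simp [hu]), boundaryAt_single_of_inr hu,
      absorb_single_of_false r hu]
    simp
  · have update_self : Function.update f u (Sum.inr true) = f := by
      rw [← hu, Function.update_eq_self]
    rw [absorbHomotopy_single_of_true r hu, boundaryAt_single_of_inr hu, map_smul,
      boundaryAt_single_of_inl (Function.update_self ..), absorb_single_of_true r hu, map_zero]
    simp [-Finsupp.smul_single, sgn_update_self, update_self, smul_smul, sgn_sq]

lemma D_comp_absorbHomotopy_add [Subsingleton (HalfEdgeAt ends u)] :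
    D ends ∘ₗ absorbHomotopy r + absorbHomotopy r ∘ₗ D ends = LinearMap.id - absorb r := by
  have sum_add : D ends ∘ₗ absorbHomotopy r + absorbHomotopy r ∘ₗ D ends =
      ∑ v, (boundaryAt v ∘ₗ absorbHomotopy r + absorbHomotopy r ∘ₗ boundaryAt v) := by
    rw [D_eq_sum_boundaryAt, Finset.sum_add_distrib]
    exact congrArg₂ (· + ·) (Finset.sum_mul ..) (Finset.mul_sum ..)
  rw [sum_add, Finset.sum_eq_single_of_mem u (Finset.mem_univ u),
    boundaryAt_comp_absorbHomotopy_self]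
  intro v _ hvu
  rw [boundaryAt_comp_absorbHomotopy_of_ne r hvu, neg_add_cancel]

lemma D_comp_absorb [Subsingleton (HalfEdgeAt ends u)] :
    D ends ∘ₗ absorb r = absorb r ∘ₗ D ends := by
  have absorb_eq := sub_sub_cancel LinearMap.id (absorb r)
  rw [← D_comp_absorbHomotopy_add] at absorb_eq
  rw [← absorb_eq, LinearMap.comp_sub, LinearMap.sub_comp, LinearMap.comp_add, LinearMap.add_comp,
    ← LinearMap.comp_assoc, LinearMap.comp_assoc (D ends) (D ends), D_comp_D, LinearMap.zero_comp,
    LinearMap.comp_zero, zero_add, add_zero, LinearMap.comp_assoc]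
  rfl

lemma hasDW_le_comap_absorbHomotopy [DecidableEq E] (i k : ℕ) :
    hasDW ends i k ≤ (hasDW ends (i + 1) k).comap (absorbHomotopy r) := by
  refine supported_le_comap ?_
  rintro ⟨m, f⟩ ⟨hdeg, hwt⟩
  by_cases hu : f u = Sum.inr true
  · rw [absorbHomotopy_single_of_true r hu]
    refine Submodule.smul_mem _ _ (single_mem_hasDW ?_ ?_)
    · simpa [hu, hdeg] using degB_update m m f u (Sum.inl r)
    · simpa [hu, hwt] using wtB_update m f u (Sum.inl r)
  · rw [absorbHomotopy_single_of_ne r hu]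
    exact zero_mem _

end Absorb

section Leaves

variable [Fintype V] [DecidableEq V] [DecidableEq E] {S : Finset V} {i k : ℕ}

lemma exists_mem_emptyOn_sub_mem_bdry (hS : ∀ u ∈ S, IsLeaf ends u)
    {x : SC ends} (hx : x ∈ cyc ends i k) :
    ∃ y ∈ cyc ends i k ⊓ emptyOn ends S, x - y ∈ bdry ends i k := by
  induction S using Finset.induction_on with
  | empty => exact ⟨x, ⟨hx, fun _ _ ↦ by simp⟩, by simp⟩
  | insert u S _ ih =>
    obtain ⟨hu, hS⟩ := (Finset.forall_mem_insert ..).mp hS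
    obtain ⟨y, ⟨⟨hy, hydw⟩, hyS⟩, hxy⟩ := ih hS
    obtain ⟨r, hr⟩ := hu.exists
    have := hu.subsingleton
    have absorb_cycle : D ends (absorb ⟨r, hr⟩ y) = 0 := by
      rw [← LinearMap.comp_apply, D_comp_absorb, LinearMap.comp_apply, hy, map_zero]
    have D_homotopy : D ends (absorbHomotopy ⟨r, hr⟩ y) = y - absorb ⟨r, hr⟩ y := by
      simpa [LinearMap.mem_ker.mp hy] using
        LinearMap.congr_fun (D_comp_absorbHomotopy_add ⟨r, hr⟩) y
    refine ⟨absorb ⟨r, hr⟩ y, ⟨⟨absorb_cycle, hasDW_le_comap_absorb _ i k hydw⟩,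
      emptyOn_le_comap_absorb _ S hyS⟩, ?_⟩
    rw [← sub_add_sub_cancel x y, ← D_homotopy]
    exact add_mem hxy (Submodule.mem_map_of_mem (hasDW_le_comap_absorbHomotopy _ i k hydw))

lemma bdry_inf_emptyOn_le (hS : ∀ u ∈ S, IsLeaf ends u) :
    bdry ends i k ⊓ emptyOn ends S ≤
      (hasDW ends (i + 1) k ⊓ emptyOn ends S).map (D ends) := by
  suffices ∀ T ⊆ S, bdry ends i k ⊓ emptyOn ends S ≤
      (hasDW ends (i + 1) k ⊓ emptyOn ends T).map (D ends) from this S subset_rfl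
  intro T hTS
  induction T using Finset.induction_on with
  | empty =>
    rintro _ ⟨⟨z, hz, rfl⟩, -⟩
    exact Submodule.mem_map_of_mem ⟨hz, fun _ _ ↦ by simp⟩
  | insert u T _ ih =>
    obtain ⟨hu, hTS⟩ := Finset.insert_subset_iff.mp hTS
    intro x hx
    obtain ⟨z, ⟨hz, hzT⟩, rfl⟩ := ih hTS hx
    obtain ⟨r, hr⟩ := (hS u hu).exists
    have := (hS u hu).subsingleton
    refine ⟨absorb ⟨r, hr⟩ z,
      ⟨hasDW_le_comap_absorb _ (i + 1) k hz, emptyOn_le_comap_absorb _ T hzT⟩, ?_⟩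
    rw [← LinearMap.comp_apply, D_comp_absorb, LinearMap.comp_apply, absorb_eq_self _ hu hx.2]

lemma disjoint_bdry_emptyOn (hS : ∀ u ∈ S, IsLeaf ends u) (hi : Sᶜ.card ≤ i) :
    Disjoint (bdry ends i k) (emptyOn ends S) := by
  rw [disjoint_iff_inf_le, ← Submodule.map_bot (D ends),
    ← hasDW_inf_emptyOn_eq_bot (Nat.lt_succ_of_le hi)]
  exact bdry_inf_emptyOn_le hS

end Leaves

end Swiatkowski

namespace Star4

open Swiatkowski

/-- The four leaves of `S₄`: the vertices that are absorbed into their edges. -/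
def leaves : Finset (Option (Fin 4)) := {none}ᶜ

lemma mem_leaves {u : Option (Fin 4)} : u ∈ leaves ↔ ∃ i, u = some i := by
  simp [leaves, Option.ne_none_iff_exists']

lemma isLeaf_of_mem_leaves {u : Option (Fin 4)} (hu : u ∈ leaves) : IsLeaf ends u := by
  obtain ⟨i, rfl⟩ := mem_leaves.mp hu
  refine ⟨(i, true), rfl, ?_⟩
  rintro ⟨j, _ | _⟩ h
  · cases h
  · cases h
    rfl

/-- The state without half-edges that is `∅` at the leaves and, at the center, the vertex generator
if `t` and `∅` otherwise. The differential turns `h_j` into such states. -/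
def stateCenter (t : Bool) : States ends := fun v ↦
  match v with
  | none => Sum.inr t
  | some _ => Sum.inr false

lemma update_stateH_none (j : Fin 4) (t : Bool) :
    Function.update (stateH j) none (Sum.inr t) = stateCenter t := by
  funext v
  rcases v with _ | i <;> rfl

lemma sgn_stateH_none (j : Fin 4) : sgn ends (stateH j) none = 1 := by
  have no_half_edge_before (w : Option (Fin 4)) :
      ¬(idx w < idx (none : Option (Fin 4)) ∧ (stateH j w).isLeft = true) := by
    rcases w with _ | i <;> simp [stateH]
  simp [sgn, no_half_edge_before]

lemma stab_sH (i j : Fin 4) :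
    stab ends i (sH j) = Finsupp.single (Finsupp.single i 1, stateH j) 1 := by
  simp [stab, sH]

lemma D_stab_sH (i j : Fin 4) :
    D ends (stab ends i (sH j)) =
      Finsupp.single (Finsupp.single i 1 + Finsupp.single j 1, stateCenter false) 1 -
        Finsupp.single (Finsupp.single i 1, stateCenter true) 1 := by
  have boundaryAt_leaf (v : Option (Fin 4)) (hv : v ≠ none) :
      boundaryAt v (stab ends i (sH j)) = 0 := by
    obtain ⟨k, rfl⟩ := Option.ne_none_iff_exists'.mp hv
    rw [stab_sH]
    exact boundaryAt_single_of_inr (t := false) rfl _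
  rw [D_eq_sum_boundaryAt, LinearMap.sum_apply, Fintype.sum_eq_single none boundaryAt_leaf,
    stab_sH, boundaryAt_single_of_inl (v := none) (h := ⟨(j, false), rfl⟩) rfl, sgn_stateH_none,
    one_smul, update_stateH_none, update_stateH_none]

lemma stateH_injective : Function.Injective stateH := fun j k h ↦ by
  have edge_eq : Sum.elim (·.1.1) (fun _ ↦ j) (stateH j none) =
      Sum.elim (·.1.1) (fun _ ↦ j) (stateH k none) := by rw [h]
  exact edge_eq

lemma stab_sH_apply (i j k l : Fin 4) :
    stab ends i (sH j) (Finsupp.single k 1, stateH l) = if i = k ∧ j = l then 1 else 0 := by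
  simp [stab_sH, Finsupp.single_apply, Finsupp.single_left_inj, stateH_injective.eq_iff]

lemma exists_eq_single_stateH {b : Bas ends} (hdeg : degB ends b = 1) (hwt : wtB ends b = 2)
    (hb : ∀ u ∈ leaves, b.2 u = Sum.inr false) :
    ∃ i j, b = (Finsupp.single i 1, stateH j) := by
  obtain ⟨m, f⟩ := b
  have f_leaf (i : Fin 4) : f (some i) = Sum.inr false := hb _ (mem_leaves.mpr ⟨i, rfl⟩)
  rcases f_none : f none with ⟨⟨j, _ | _⟩, hj⟩ | t
  · have sum_m : (m.sum fun _ n ↦ n) = 1 := by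
      simpa [wtB, Fintype.sum_option, f_none, f_leaf] using hwt
    obtain ⟨i, rfl⟩ := m.sum_eq_one_iff.mp sum_m
    refine ⟨i, j, Prod.ext rfl (funext fun v ↦ ?_)⟩
    rcases v with _ | k
    exacts [f_none, f_leaf k]
  · cases hj
  · rw [degB_eq_sum, Fintype.sum_option] at hdeg
    simp [f_none, f_leaf] at hdeg

lemma hasDW_inf_emptyOn_leaves_le :
    hasDW ends 1 2 ⊓ emptyOn ends leaves ≤
      Submodule.span ℤ (Set.range fun p : Fin 4 × Fin 4 ↦ stab ends p.1 (sH p.2)) := by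
  refine (Finsupp.supported_inter _ _).ge.trans
    (supported_le_comap (N := Submodule.span _ _) (φ := LinearMap.id) ?_)
  rintro b ⟨⟨hdeg, hwt⟩, hb⟩
  obtain ⟨i, j, rfl⟩ := exists_eq_single_stateH hdeg hwt hb
  exact Submodule.subset_span ⟨(i, j), stab_sH i j⟩

lemma stateCenter_false_ne_true : stateCenter false ≠ stateCenter true := fun h ↦ by
  simpa [stateCenter] using congrFun h none

lemma D_stab_sH_apply_true (i j k : Fin 4) :
    D ends (stab ends i (sH j)) (Finsupp.single k 1, stateCenter true) =
      if i = k then -1 else 0 := by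
  simp [D_stab_sH, Finsupp.single_apply, Finsupp.single_left_inj, stateCenter_false_ne_true,
    neg_ite]

lemma D_stab_sH_apply_false (i j k l : Fin 4) :
    D ends (stab ends i (sH j)) (Finsupp.single k 1 + Finsupp.single l 1, stateCenter false) =
      if i = k ∧ j = l ∨ i = l ∧ j = k then 1 else 0 := by
  simp [D_stab_sH, Finsupp.single_apply, stateCenter_false_ne_true.symm,
    Finsupp.single_add_single_eq_single_add_single]

section Coefficients

variable {a : Fin 4 × Fin 4 → ℤ}

lemma sum_row_eq_zero_of_D_eq_zero (ha : D ends (∑ p, a p • stab ends p.1 (sH p.2)) = 0)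
    (k : Fin 4) : ∑ l, a (k, l) = 0 := by
  have h := DFunLike.congr_fun ha (Finsupp.single k 1, stateCenter true)
  simpa [Finsupp.finsetSum_apply, D_stab_sH_apply_true, Fintype.sum_prod_type] using h

lemma add_swap_eq_zero_of_D_eq_zero (ha : D ends (∑ p, a p • stab ends p.1 (sH p.2)) = 0)
    (k l : Fin 4) : a (k, l) + a (l, k) = 0 := by
  have h := DFunLike.congr_fun ha (Finsupp.single k 1 + Finsupp.single l 1, stateCenter false)
  rcases eq_or_ne k l with rfl | hkl
  · have a_diag : a (k, k) = 0 := by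
      simpa [Finsupp.finsetSum_apply, D_stab_sH_apply_false, Fintype.sum_prod_type, ite_and] using h
    rw [a_diag, add_zero]
  · have ite_or_eq_add (i j : Fin 4) : (if i = k ∧ j = l ∨ i = l ∧ j = k then 1 else 0 : ℤ) =
        (if i = k ∧ j = l then 1 else 0) + (if i = l ∧ j = k then 1 else 0) := by
      split_ifs <;> simp_all
    simpa [Finsupp.finsetSum_apply, D_stab_sH_apply_false, ite_or_eq_add, mul_add,
      Finset.sum_add_distrib, Fintype.sum_prod_type, ite_and] using h

lemma sum_smul_stab_sH_apply (k l : Fin 4) :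
    (∑ p, a p • stab ends p.1 (sH p.2)) (Finsupp.single k 1, stateH l) = a (k, l) := by
  simp [Finsupp.finsetSum_apply, stab_sH_apply, Fintype.sum_prod_type, ite_and]

lemma sum_smul_stab_sH_eq_sum_starCyc (row : ∀ k, ∑ l, a (k, l) = 0)
    (skew : ∀ k l, a (k, l) + a (l, k) = 0) :
    ∑ p, a p • stab ends p.1 (sH p.2) =
      a (1, 2) • starCyc 1 2 + a (1, 3) • starCyc 1 3 + a (2, 3) • starCyc 2 3 := by
  have diag (k : Fin 4) : a (k, k) = 0 := by linarith [skew k k]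
  have swap (k l : Fin 4) : a (l, k) = -a (k, l) := by linarith [skew k l]
  have zero_left (k : Fin 4) : a (0, k) = a (k, 1) + a (k, 2) + a (k, 3) := by
    have row_k := row k
    rw [Fin.sum_univ_four] at row_k
    linarith [skew 0 k]
  simp only [Fintype.sum_prod_type, Fin.sum_univ_four, starCyc, map_sub, diag, swap 0,
    swap 1 2, swap 1 3, swap 2 3, zero_left]
  module

end Coefficients

lemma starCyc_mem (j k : Fin 4) : starCyc j k ∈ cyc ends 1 2 ⊓ emptyOn ends leaves := by
  have stab_sH_mem (i j : Fin 4) : stab ends i (sH j) ∈ hasDW ends 1 2 ⊓ emptyOn ends leaves := by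
    rw [stab_sH]
    refine ⟨single_mem_hasDW ?_ ?_, Finsupp.single_mem_supported ℤ 1 fun u hu ↦ ?_⟩
    · simp [degB_eq_sum, Fintype.sum_option, stateH]
    · simp [wtB, Fintype.sum_option, stateH]
    · obtain ⟨k, rfl⟩ := mem_leaves.mp hu
      rfl
  have D_starCyc : D ends (starCyc j k) = 0 := by
    simp only [starCyc, map_add, map_sub, D_stab_sH, add_comm (Finsupp.single j 1),
      add_comm (Finsupp.single k 1) (Finsupp.single 0 1)]
    abel
  have mem : starCyc j k ∈ hasDW ends 1 2 ⊓ emptyOn ends leaves := by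
    simp only [starCyc, map_sub]
    exact add_mem (add_mem (sub_mem (stab_sH_mem ..) (stab_sH_mem ..))
      (sub_mem (stab_sH_mem ..) (stab_sH_mem ..))) (sub_mem (stab_sH_mem ..) (stab_sH_mem ..))
  exact ⟨⟨D_starCyc, mem.1⟩, mem.2⟩

lemma existsUnique_eq_sum_starCyc {y : SC ends} (hy : y ∈ cyc ends 1 2 ⊓ emptyOn ends leaves) :
    ∃! c : Fin 3 → ℤ, y = c 0 • starCyc 1 2 + c 1 • starCyc 1 3 + c 2 • starCyc 2 3 := by
  obtain ⟨⟨hDy, hydw⟩, hyS⟩ := hy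
  obtain ⟨a, rfl⟩ :=
    (Submodule.mem_span_range_iff_exists_fun ℤ).mp (hasDW_inf_emptyOn_leaves_le ⟨hydw, hyS⟩)
  refine ⟨![a (1, 2), a (1, 3), a (2, 3)],
    sum_smul_stab_sH_eq_sum_starCyc (sum_row_eq_zero_of_D_eq_zero hDy)
      (add_swap_eq_zero_of_D_eq_zero hDy), fun d hd ↦ ?_⟩
  have coeff_eq (i j : Fin 4) :
      (d 0 • starCyc 1 2 + d 1 • starCyc 1 3 + d 2 • starCyc 2 3) (Finsupp.single i 1, stateH j) =
        a (i, j) := by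
    rw [← hd, sum_smul_stab_sH_apply]
  ext n
  fin_cases n
  · simpa [starCyc, stab_sH_apply] using coeff_eq 1 2
  · simpa [starCyc, stab_sH_apply] using coeff_eq 1 3
  · simpa [starCyc, stab_sH_apply] using coeff_eq 2 3

/-- `H₁(B₂(S₄))` — the homology of the Świątkowski complex of
the star graph with four edges in degree 1 and weight 2 — is free abelian of
rank 3, freely generated by the star classes `α_{123}, α_{124}, α_{134}`:
the star cycles are cycles of degree 1 and weight 2, and every such cycle is,
uniquely, a ℤ-linear combination of them modulo boundaries. -/
theorem H1_B2_star4_free_rank_three :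
    (starCyc 1 2 ∈ cyc ends 1 2 ∧ starCyc 1 3 ∈ cyc ends 1 2 ∧
      starCyc 2 3 ∈ cyc ends 1 2) ∧
    ∀ x ∈ cyc ends 1 2, ∃! c : Fin 3 → ℤ,
      x - (c 0 • starCyc 1 2 + c 1 • starCyc 1 3 + c 2 • starCyc 2 3)
        ∈ bdry ends 1 2 := by
  refine ⟨⟨(starCyc_mem 1 2).1, (starCyc_mem 1 3).1, (starCyc_mem 2 3).1⟩, fun x hx ↦ ?_⟩
  obtain ⟨y, hy, hxy⟩ := exists_mem_emptyOn_sub_mem_bdry (fun _ ↦ isLeaf_of_mem_leaves) hx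
  obtain ⟨c, rfl, c_unique⟩ := existsUnique_eq_sum_starCyc hy
  refine ⟨c, hxy, fun d hd ↦ c_unique d ?_⟩
  have sub_mem_bdry := sub_mem hd hxy
  rw [sub_sub_sub_cancel_left] at sub_mem_bdry
  refine sub_eq_zero.mp (Submodule.disjoint_def.mp (disjoint_bdry_emptyOn
    (fun _ ↦ isLeaf_of_mem_leaves) ?_) _ sub_mem_bdry ?_)
  · simp [leaves]
  · exact sub_mem hy.2 (add_mem (add_mem (Submodule.smul_mem _ _ (starCyc_mem 1 2).2)
      (Submodule.smul_mem _ _ (starCyc_mem 1 3).2)) (Submodule.smul_mem _ _ (starCyc_mem 2 3).2))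

end Star4
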